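/- Let G be a finite group, let (σ_j)_{j∈J} be a complete family of irreducibles for G, let k ≥ 1, let ρ be a unitary representation of G^k on a finite-dimensional complex inner product space V, and let M ⊆ G be a conjugacy class of involutions with representative m₀. Then for every unit vector b ∈ V, Var_{m∈M} ‖Π_m b‖² ≤ 4^{-k} Σ_{∅ ≠ I₁ ⊆ {1,…,k}} Σ_{∅ ≠ I₂ ⊆ {1,…,k}} E^{I₁,I₂}(b), where Π_m = 2^{-k} Σ_{I ⊆ {1,…,k}} ρ(m^I). -/

import Mathlib

noncomputable section

open scoped BigOperators InnerProductSpace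

def IsUnitaryRep {G V : Type*} [Group G] [NormedAddCommGroup V] [InnerProductSpace ℂ V]
    (ρ : Representation ℂ G V) : Prop :=
  ∀ (g : G) (v w : V), ⟪ρ g v, ρ g w⟫_ℂ = ⟪v, w⟫_ℂ

def IsIrreducibleRep {G V : Type*} [Group G] [AddCommGroup V] [Module ℂ V]
    (ρ : Representation ℂ G V) : Prop :=
  (∃ v : V, v ≠ 0) ∧
    ∀ W : Submodule ℂ V, (∀ (g : G) (v : V), v ∈ W → ρ g v ∈ W) → W = ⊥ ∨ W = ⊤

def RepIso {G V₁ V₂ : Type*} [Group G] [AddCommGroup V₁] [Module ℂ V₁]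
    [AddCommGroup V₂] [Module ℂ V₂]
    (ρ₁ : Representation ℂ G V₁) (ρ₂ : Representation ℂ G V₂) : Prop :=
  ∃ e : V₁ ≃ₗ[ℂ] V₂, ∀ (g : G) (v : V₁), e (ρ₁ g v) = ρ₂ g (e v)

def repChar {G V : Type*} [Group G] [AddCommGroup V] [Module ℂ V]
    (ρ : Representation ℂ G V) (g : G) : ℂ := LinearMap.trace ℂ V (ρ g)

def IsCompleteFamily {G : Type*} [Group G] {J : Type*}
    (W : J → Type*) [∀ j, NormedAddCommGroup (W j)] [∀ j, InnerProductSpace ℂ (W j)]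
    [∀ j, FiniteDimensional ℂ (W j)]
    (σ : ∀ j, Representation ℂ G (W j)) : Prop :=
  (∀ j, IsUnitaryRep (σ j)) ∧ (∀ j, IsIrreducibleRep (σ j)) ∧
    (∀ j j', j ≠ j' → ¬ RepIso (σ j) (σ j')) ∧
    (∀ (U : Type) [AddCommGroup U] [Module ℂ U] [FiniteDimensional ℂ U]
      (τ : Representation ℂ G U), IsIrreducibleRep τ → ∃ j, RepIso τ (σ j))

def isoProj {G V : Type*} [Group G] [Fintype G] [AddCommGroup V] [Module ℂ V]
    (d : ℕ) (χ : G → ℂ) (ρ : Representation ℂ G V) : V →ₗ[ℂ] V :=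
  ((d : ℂ) / (Fintype.card G : ℂ)) • ∑ g : G, starRingEnd ℂ (χ g) • (ρ g : V →ₗ[ℂ] V)

def onI {G : Type*} [One G] {k : ℕ} (g : G) (I : Finset (Fin k)) : Fin k → G :=
  fun i => if i ∈ I then g else 1

def invProj {G V : Type*} [Group G] [AddCommGroup V] [Module ℂ V] {k : ℕ}
    (ρ : Representation ℂ (Fin k → G) V) (m : G) : V →ₗ[ℂ] V :=
  ((2 : ℂ) ^ k)⁻¹ • ∑ I : Finset (Fin k), (ρ (onI m I) : V →ₗ[ℂ] V)

def isoProjI {G V : Type*} [Group G] [Fintype G] [AddCommGroup V] [Module ℂ V] {k : ℕ}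
    (ρ : Representation ℂ (Fin k → G) V) (d : ℕ) (χ : G → ℂ) (I : Finset (Fin k)) :
    V →ₗ[ℂ] V :=
  ((d : ℂ) / (Fintype.card G : ℂ)) • ∑ g : G, starRingEnd ℂ (χ g) • (ρ (onI g I) : V →ₗ[ℂ] V)

open scoped ComplexOrder

/-!
The characters of a complete family of irreducibles span the class functions on `G`; expanding the
indicator function of `M` in them shows that `Σ_j χ_j(m₀) conj (χ_j(g))` is `|G| / |M|` on `M` and
`0` elsewhere. Hence weighting the isotypic parts of `b ⊗ b*` by `χ_j(m₀) / d_j` amounts to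
averaging over `M`, and the double sum over all `I₁, I₂ ≠ ∅` factors for each `m ∈ M`. Since `Π_m`
is an orthogonal projection and `I = ∅` contributes `‖b‖²` to `2^k ‖Π_m b‖²`, the right-hand side
is `E_m (‖Π_m b‖² - 2^{-k} ‖b‖²)²`, and the variance of a function is at most its mean squared
deviation from any constant.
-/

open scoped MonoidAlgebra symmDiff

universe u v

section ClassFunction

/-- A class function on `G`: a function that is constant on conjugacy classes, the natural domain
for expansions in irreducible characters. Conjugacy is `IsConj`, so `G` may be a monoid. -/
def IsClassFunction {G α : Type*} [Monoid G] (f : G → α) : Prop :=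
  ∀ ⦃g h : G⦄, IsConj g h → f g = f h

lemma IsClassFunction.commute_sum_smul {k G V : Type*} [CommSemiring k] [Group G] [Fintype G]
    [AddCommMonoid V] [Module k V] {f : G → k} (hf : IsClassFunction f)
    (ρ : Representation k G V) (x : G) : Commute (∑ g, f g • ρ g) (ρ x) := by
  rw [Commute, SemiconjBy, Finset.sum_mul, Finset.mul_sum]
  refine Fintype.sum_equiv (MulAut.conj x⁻¹).toEquiv _ _ fun g => ?_
  have hg : f (x⁻¹ * (g * x)) = f g := (hf (isConj_iff.2 ⟨x⁻¹, by simp [mul_assoc]⟩)).symm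
  simp [← map_mul, hg, mul_assoc]

variable {k G V : Type*} [Field k] [Group G] [AddCommGroup V] [Module k V]

lemma isClassFunction_character (ρ : Representation k G V) : IsClassFunction ρ.character := by
  intro g h hgh
  obtain ⟨x, rfl⟩ := isConj_iff.1 hgh
  exact (ρ.char_conj g x).symm

lemma IsClassFunction.finrank_smul_sum_smul [Fintype G] [IsAlgClosed k] [FiniteDimensional k V]
    {f : G → k} (hf : IsClassFunction f) (ρ : Representation k G V) [ρ.IsIrreducible] :
    (Module.finrank k V : k) • ∑ g, f g • ρ g = (∑ g, f g * ρ.character g) • 1 := by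
  let T : ρ.IntertwiningMap ρ := ⟨∑ g, f g • ρ g, fun x => hf.commute_sum_smul ρ x⟩
  obtain ⟨c, hc⟩ :=
    Representation.IsIrreducible.algebraMap_intertwiningMap_bijective_of_isAlgClosed.2 T
  have hscalar : ∑ g, f g • ρ g = c • (1 : Module.End k V) :=
    (congrArg Representation.IntertwiningMap.toLinearMap hc).symm
  have htrace : ∑ g, f g * ρ.character g = c * Module.finrank k V := by
    simpa [Representation.character] using congrArg (LinearMap.trace k V) hscalar
  rw [hscalar, htrace, smul_smul, mul_comm]

end ClassFunction

section GroupAlgebra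

lemma asAlgebraHom_ofModule'_apply {k G M : Type*} [CommSemiring k] [Monoid G] [AddCommMonoid M]
    [Module k M] [Module k[G] M] [IsScalarTower k k[G] M] (a : k[G]) (m : M) :
    (Representation.ofModule' M).asAlgebraHom a m = a • m := by
  simp [Representation.ofModule', Representation.asAlgebraHom_def]

lemma isIrreducible_ofModule' {k G M : Type*} [Field k] [Monoid G] [AddCommGroup M] [Module k M]
    [Module k[G] M] [IsScalarTower k k[G] M] [IsSimpleModule k[G] M] :
    (Representation.ofModule' (k := k) (G := G) M).IsIrreducible := by
  let ρ := Representation.ofModule' (k := k) (G := G) M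
  let e : ρ.asModule ≃ₗ[k[G]] M := ρ.asModuleEquiv.toAddEquiv.toLinearEquiv fun a m => by
    simp [ρ, asAlgebraHom_ofModule'_apply]
  exact (Representation.irreducible_iff_isSimpleModule_asModule ρ).2 (.congr e)

-- By Maschke's theorem the Jacobson radical of `k[G]` vanishes, so it suffices that `a` kills
-- every simple quotient of `k[G]`.
lemma eq_zero_of_forall_asAlgebraHom_eq_zero {k : Type u} {G : Type v} [Field k] [Group G]
    [Finite G] [NeZero (Nat.card G : k)] {a : k[G]}
    (ha : ∀ (V : Type (max u v)) [AddCommGroup V] [Module k V] [FiniteDimensional k V]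
      (ρ : Representation k G V), ρ.IsIrreducible → ρ.asAlgebraHom a = 0) : a = 0 := by
  suffices a ∈ Ring.jacobson k[G] by simpa [IsSemisimpleRing.jacobson_eq_bot] using this
  refine Submodule.mem_sInf.2 fun I hI => ?_
  have : IsSimpleModule k[G] (k[G] ⧸ I) := isSimpleModule_iff_isCoatom.2 hI
  have : FiniteDimensional k (k[G] ⧸ I) := Module.Finite.trans k[G] _
  have hmk := LinearMap.congr_fun (ha _ _ (isIrreducible_ofModule' (M := k[G] ⧸ I)))
    (Submodule.Quotient.mk 1)
  simpa [asAlgebraHom_ofModule'_apply, ← Submodule.Quotient.mk_smul] using hmk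

end GroupAlgebra

section Irreducible

variable {G V W : Type*} [Group G] [AddCommGroup V] [Module ℂ V] [AddCommGroup W] [Module ℂ W]
  {ρ : Representation ℂ G V} {τ : Representation ℂ G W}

lemma isIrreducibleRep_iff : IsIrreducibleRep ρ ↔ ρ.IsIrreducible := by
  have hnontrivial : (∃ v : V, v ≠ 0) ↔ Nontrivial (Subrepresentation ρ) := by
    rw [← nontrivial_iff_exists_ne, ← Submodule.nontrivial_iff ℂ,
      ← not_subsingleton_iff_nontrivial, ← not_subsingleton_iff_nontrivial,
      ← subsingleton_iff_bot_eq_top, ← subsingleton_iff_bot_eq_top]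
    exact not_congr (Subrepresentation.toSubmodule_injective.eq_iff (a := ⊥) (b := ⊤))
  rw [Representation.IsIrreducible, isSimpleOrder_iff, IsIrreducibleRep, hnontrivial]
  exact and_congr_right fun _ =>
    ⟨fun h S => (h S.toSubmodule S.apply_mem_toSubmodule).imp
      (fun hS => Subrepresentation.toSubmodule_injective hS)
      (fun hS => Subrepresentation.toSubmodule_injective hS),
    fun h U hU => (h ⟨U, hU⟩).imp (congrArg Subrepresentation.toSubmodule)
      (congrArg Subrepresentation.toSubmodule)⟩

lemma repIso_iff_nonempty_equiv : RepIso ρ τ ↔ Nonempty (ρ.Equiv τ) :=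
  ⟨fun ⟨e, he⟩ => ⟨.mk e fun g => LinearMap.ext (he g)⟩,
    fun ⟨φ⟩ => ⟨φ.toLinearEquiv, fun g => LinearMap.congr_fun (φ.isIntertwining' g)⟩⟩

lemma RepIso.trans {U : Type*} [AddCommGroup U] [Module ℂ U] {υ : Representation ℂ G U}
    (h₁ : RepIso ρ τ) (h₂ : RepIso τ υ) : RepIso ρ υ := by
  obtain ⟨e₁, he₁⟩ := h₁
  obtain ⟨e₂, he₂⟩ := h₂
  exact ⟨e₁.trans e₂, fun g v => by simp [he₁, he₂]⟩

lemma RepIso.isIrreducibleRep (h : RepIso ρ τ) (hρ : IsIrreducibleRep ρ) :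
    IsIrreducibleRep τ := by
  obtain ⟨e, he⟩ := h
  obtain ⟨⟨v, hv⟩, hsub⟩ := hρ
  refine ⟨⟨e v, e.map_ne_zero_iff.2 hv⟩, fun U hU => ?_⟩
  let pullback := (Submodule.orderIsoMapComap e).symm
  have hpullback : pullback U = ⊥ ∨ pullback U = ⊤ := hsub (pullback U) fun g w hw => by
    simpa [pullback, he] using hU g _ hw
  rwa [map_eq_bot_iff, map_eq_top_iff] at hpullback

lemma RepIso.repChar_eq (h : RepIso ρ τ) : repChar ρ = repChar τ := by
  obtain ⟨φ⟩ := repIso_iff_nonempty_equiv.1 h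
  exact Representation.char_iso φ

variable (ρ) in
lemma exists_repIso_fin [FiniteDimensional ℂ V] :
    ∃ τ : Representation ℂ G (Fin (Module.finrank ℂ V) → ℂ), RepIso ρ τ := by
  let e := (Module.finBasis ℂ V).equivFun
  exact ⟨(e.conjRingEquiv : Module.End ℂ V →* _).comp ρ, e, fun g v => by simp⟩

lemma IsIrreducibleRep.finrank_ne_zero [FiniteDimensional ℂ V] (hρ : IsIrreducibleRep ρ) :
    Module.finrank ℂ V ≠ 0 := by
  have : Nontrivial V := (nontrivial_iff_exists_ne 0).2 hρ.1
  exact Module.finrank_pos.ne'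

lemma IsIrreducibleRep.sum_smul_eq_zero [Fintype G] [FiniteDimensional ℂ V]
    (hρ : IsIrreducibleRep ρ) {f : G → ℂ} (hf : IsClassFunction f)
    (h0 : ∑ g, f g * repChar ρ g = 0) : ∑ g, f g • ρ g = 0 := by
  have := isIrreducibleRep_iff.1 hρ
  have hsmul := hf.finrank_smul_sum_smul ρ
  rw [show ∑ g, f g * ρ.character g = 0 from h0, zero_smul] at hsmul
  exact (smul_eq_zero.1 hsmul).resolve_left (Nat.cast_ne_zero.2 hρ.finrank_ne_zero)

end Irreducible

lemma IsUnitaryRep.conj_repChar {G V : Type*} [Group G] [NormedAddCommGroup V]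
    [InnerProductSpace ℂ V] [FiniteDimensional ℂ V] {ρ : Representation ℂ G V}
    (hρ : IsUnitaryRep ρ) (g : G) : starRingEnd ℂ (repChar ρ g) = repChar ρ g⁻¹ := by
  have hadjoint : ∀ v, ⟪ρ g v, v⟫_ℂ = ⟪v, ρ g⁻¹ v⟫_ℂ := fun v => by
    rw [← hρ g v (ρ g⁻¹ v), Representation.self_inv_apply]
  simp_rw [repChar, LinearMap.trace_eq_sum_inner _ (stdOrthonormalBasis ℂ V), map_sum,
    inner_conj_symm, hadjoint]

namespace IsCompleteFamily

variable {G J : Type*} [Group G] {W : J → Type*} [∀ j, NormedAddCommGroup (W j)]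
  [∀ j, InnerProductSpace ℂ (W j)] [∀ j, FiniteDimensional ℂ (W j)]
  {σ : ∀ j, Representation ℂ G (W j)}

-- `IsCompleteFamily` only quantifies over spaces in `Type`; coordinates remove the restriction.
lemma exists_repIso (hfam : IsCompleteFamily W σ) {V : Type*} [AddCommGroup V] [Module ℂ V]
    [FiniteDimensional ℂ V] {ρ : Representation ℂ G V} (hρ : IsIrreducibleRep ρ) :
    ∃ j, RepIso ρ (σ j) := by
  obtain ⟨τ, hτ⟩ := exists_repIso_fin ρ
  obtain ⟨j, hj⟩ := hfam.2.2.2 _ τ (hτ.isIrreducibleRep hρ)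
  exact ⟨j, hτ.trans hj⟩

variable [Fintype G]

lemma classFunction_eq_zero (hfam : IsCompleteFamily W σ) {f : G → ℂ} (hf : IsClassFunction f)
    (h0 : ∀ j, ∑ g, f g * repChar (σ j) g = 0) : f = 0 := by
  have hzero : (∑ g, MonoidAlgebra.single g (f g) : ℂ[G]) = 0 := by
    refine eq_zero_of_forall_asAlgebraHom_eq_zero fun V _ _ _ ρ hρ => ?_
    obtain ⟨j, hj⟩ := hfam.exists_repIso (isIrreducibleRep_iff.2 hρ)
    have hsum := (isIrreducibleRep_iff.2 hρ).sum_smul_eq_zero hf (hj.repChar_eq ▸ h0 j)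
    simpa using hsum
  classical
  ext g
  simpa [Finsupp.single_apply] using congrArg (fun a : ℂ[G] => a.coeff g) hzero

lemma expect_repChar_mul_conj_repChar [DecidableEq J] (hfam : IsCompleteFamily W σ) (i j : J) :
    𝔼 g, repChar (σ i) g * starRingEnd ℂ (repChar (σ j) g) = if i = j then 1 else 0 := by
  obtain ⟨hunitary, hirr, hniso, -⟩ := hfam
  have := isIrreducibleRep_iff.1 (hirr i)
  have := isIrreducibleRep_iff.1 (hirr j)
  have : Invertible (Nat.card G : ℂ) := invertibleOfNonzero (by simp)
  have hiso : Nonempty ((σ j).Equiv (σ i)) ↔ i = j := by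
    rw [← repIso_iff_nonempty_equiv]
    refine ⟨fun h => ?_, ?_⟩
    · by_contra hij
      exact hniso j i (Ne.symm hij) h
    · rintro rfl
      exact repIso_iff_nonempty_equiv.2 ⟨.refl _⟩
  have horth := Representation.char_orthonormal (σ i) (σ j)
  rw [inv_mul_eq_div, Nat.card_eq_fintype_card, ← Fintype.expect_eq_sum_div_card] at horth
  simp only [hiso] at horth
  simp only [(hunitary j).conj_repChar]
  exact horth

variable [Fintype J]

lemma classFunction_eq_sum_conj_repChar (hfam : IsCompleteFamily W σ) {f : G → ℂ}
    (hf : IsClassFunction f) (g : G) :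
    f g = ∑ j, (𝔼 h, f h * repChar (σ j) h) * starRingEnd ℂ (repChar (σ j) g) := by
  classical
  let c : J → ℂ := fun j => 𝔼 h, f h * repChar (σ j) h
  let D : G → ℂ := fun g => f g - ∑ j, c j * starRingEnd ℂ (repChar (σ j) g)
  have hclass : IsClassFunction D := fun g h hgh => by
    have hχ : ∀ j, repChar (σ j) g = repChar (σ j) h := fun j =>
      isClassFunction_character (σ j) hgh
    simp only [D, hf hgh, hχ]
  have horth : ∀ i, ∑ g, D g * repChar (σ i) g = 0 := fun i => by
    have hexpect : 𝔼 g, D g * repChar (σ i) g = 0 := by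
      simp_rw [D, sub_mul, Finset.expect_sub_distrib, Finset.sum_mul, Finset.expect_sum_comm,
        mul_assoc, ← Finset.mul_expect, mul_comm (starRingEnd ℂ _),
        hfam.expect_repChar_mul_conj_repChar]
      simp [c]
    rw [← Fintype.card_mul_expect, hexpect, mul_zero]
  exact sub_eq_zero.1 (congrFun (hfam.classFunction_eq_zero hclass horth) g)

variable {M : Finset G} {m₀ : G}

lemma sum_repChar_mul_conj_repChar [DecidableEq G] (hfam : IsCompleteFamily W σ)
    (hM : ∀ m, m ∈ M ↔ IsConj m₀ m) (g : G) :
    ∑ j, repChar (σ j) m₀ * starRingEnd ℂ (repChar (σ j) g) =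
      if g ∈ M then (Fintype.card G : ℂ) / M.card else 0 := by
  let f : G → ℂ := fun g => if g ∈ M then (Fintype.card G : ℂ) / M.card else 0
  have hf : IsClassFunction f := fun g h hgh => by
    have hiff : g ∈ M ↔ h ∈ M := by
      rw [hM, hM]
      exact ⟨fun hg => hg.trans hgh, fun hh => hh.trans hgh.symm⟩
    simp only [f, hiff]
  have hM0 : (M.card : ℂ) ≠ 0 :=
    Nat.cast_ne_zero.2 (Finset.card_ne_zero_of_mem ((hM m₀).2 (.refl m₀)))
  have hcoeff : ∀ j, 𝔼 h, f h * repChar (σ j) h = repChar (σ j) m₀ := fun j => by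
    have hconst : ∀ m ∈ M, repChar (σ j) m = repChar (σ j) m₀ := fun m hm =>
      (isClassFunction_character (σ j) ((hM m).1 hm)).symm
    simp only [f, Fintype.expect_eq_sum_div_card, ite_mul, zero_mul, Finset.sum_ite_mem,
      Finset.univ_inter, ← Finset.mul_sum, Finset.sum_congr rfl hconst, Finset.sum_const,
      nsmul_eq_mul]
    field_simp
  simpa only [hcoeff] using (hfam.classFunction_eq_sum_conj_repChar hf g).symm

lemma sum_repChar_div_finrank_mul_eq_expect (hfam : IsCompleteFamily W σ)
    (hM : ∀ m, m ∈ M ↔ IsConj m₀ m) (φ : G → ℂ) :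
    ∑ j, repChar (σ j) m₀ / (Module.finrank ℂ (W j) : ℂ) *
        ((Module.finrank ℂ (W j) : ℂ) / (Fintype.card G : ℂ) *
          ∑ g : G, starRingEnd ℂ (repChar (σ j) g) * φ g) = 𝔼 m ∈ M, φ m := by
  classical
  have hterm : ∀ j, repChar (σ j) m₀ / (Module.finrank ℂ (W j) : ℂ) *
        ((Module.finrank ℂ (W j) : ℂ) / (Fintype.card G : ℂ) *
          ∑ g : G, starRingEnd ℂ (repChar (σ j) g) * φ g) =
      𝔼 g, repChar (σ j) m₀ * starRingEnd ℂ (repChar (σ j) g) * φ g := fun j => by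
    have hd : (Module.finrank ℂ (W j) : ℂ) ≠ 0 :=
      Nat.cast_ne_zero.2 (hfam.2.1 j).finrank_ne_zero
    simp_rw [Fintype.expect_eq_sum_div_card, mul_assoc, ← Finset.mul_sum]
    field_simp
  have hG : (Fintype.card G : ℂ) ≠ 0 := by simp
  simp_rw [hterm, ← Finset.expect_sum_comm, ← Finset.sum_mul,
    hfam.sum_repChar_mul_conj_repChar hM, Fintype.expect_eq_sum_div_card,
    Finset.expect_eq_sum_div_card, ite_mul, zero_mul, Finset.sum_ite_mem, Finset.univ_inter,
    ← Finset.mul_sum]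
  field_simp

end IsCompleteFamily

section Involution

lemma onI_empty {G : Type*} [One G] {k : ℕ} (g : G) : onI g (∅ : Finset (Fin k)) = 1 := by
  ext i
  simp [onI]

lemma onI_mul_onI {G : Type*} [MulOneClass G] {k : ℕ} {m : G} (hm : m * m = 1)
    (I I' : Finset (Fin k)) : onI m I * onI m I' = onI m (I ∆ I') := by
  ext i
  by_cases h : i ∈ I <;> by_cases h' : i ∈ I' <;> simp [onI, Finset.mem_symmDiff, h, h', hm]

lemma IsUnitaryRep.isSymmetric_of_mul_self_eq_one {G V : Type*} [Group G] [NormedAddCommGroup V]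
    [InnerProductSpace ℂ V] {ρ : Representation ℂ G V} (hρ : IsUnitaryRep ρ) {g : G}
    (hg : g * g = 1) : (ρ g).IsSymmetric := fun v w => by
  rw [← hρ g (ρ g v) w, ← Module.End.mul_apply, ← map_mul, hg, map_one, Module.End.one_apply]

variable {G V : Type*} [Group G] {k : ℕ} {m : G}

lemma apply_onI_mul_invProj [AddCommGroup V] [Module ℂ V] (ρ : Representation ℂ (Fin k → G) V)
    (hm : m * m = 1) (I : Finset (Fin k)) : ρ (onI m I) * invProj ρ m = invProj ρ m := by
  simp_rw [invProj, mul_smul_comm, Finset.mul_sum, ← map_mul, onI_mul_onI hm]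
  congr 1
  exact Fintype.sum_equiv (symmDiff_right_involutive I).toPerm _ _ fun _ => rfl

lemma isIdempotentElem_invProj [AddCommGroup V] [Module ℂ V]
    (ρ : Representation ℂ (Fin k → G) V) (hm : m * m = 1) : IsIdempotentElem (invProj ρ m) := by
  rw [IsIdempotentElem]
  nth_rw 1 [invProj]
  simp [Finset.sum_mul, apply_onI_mul_invProj ρ hm, ← Nat.cast_smul_eq_nsmul ℂ]

variable [NormedAddCommGroup V] [InnerProductSpace ℂ V] {ρ : Representation ℂ (Fin k → G) V}

lemma IsUnitaryRep.isSymmetricProjection_invProj (hρ : IsUnitaryRep ρ) (hm : m * m = 1) :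
    (invProj ρ m).IsSymmetricProjection := by
  refine ⟨isIdempotentElem_invProj ρ hm, .smul (by simp [map_ofNat]) ?_⟩
  refine LinearMap.isSymmetric_sum _ fun I _ => hρ.isSymmetric_of_mul_self_eq_one ?_
  rw [onI_mul_onI hm, symmDiff_self, Finset.bot_eq_empty, onI_empty]

lemma IsUnitaryRep.sum_inner_onI (hρ : IsUnitaryRep ρ) (hm : m * m = 1) (b : V) :
    ∑ I ∈ Finset.univ.filter (fun I : Finset (Fin k) => I ≠ ∅), ⟪b, ρ (onI m I) b⟫_ℂ =
      ((2 ^ k * ‖invProj ρ m b‖ ^ 2 - ‖b‖ ^ 2 : ℝ) : ℂ) := by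
  have hproj := hρ.isSymmetricProjection_invProj hm
  have hnorm : (‖invProj ρ m b‖ ^ 2 : ℂ) = ⟪b, invProj ρ m b⟫_ℂ := by
    rw [← Complex.coe_algebraMap, ← inner_self_eq_norm_sq_to_K, hproj.isSymmetric,
      ← Module.End.mul_apply, hproj.isIdempotentElem]
  have htotal : ∑ I : Finset (Fin k), ⟪b, ρ (onI m I) b⟫_ℂ = 2 ^ k * ‖invProj ρ m b‖ ^ 2 := by
    rw [hnorm]
    simp [invProj]
  have hempty : ⟪b, ρ (onI m ∅) b⟫_ℂ = (‖b‖ : ℂ) ^ 2 := by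
    simp [onI_empty, inner_self_eq_norm_sq_to_K]
  rw [Finset.filter_ne', Finset.sum_erase_eq_sub (Finset.mem_univ _), htotal, hempty]
  push_cast
  rfl

lemma IsUnitaryRep.sum_sum_inner_onI_mul_conj (hρ : IsUnitaryRep ρ) (hm : m * m = 1) (b : V) :
    ((4 : ℂ) ^ k)⁻¹ *
        ∑ I₁ ∈ Finset.univ.filter (fun I : Finset (Fin k) => I ≠ ∅),
        ∑ I₂ ∈ Finset.univ.filter (fun I : Finset (Fin k) => I ≠ ∅),
          ⟪b, ρ (onI m I₁) b⟫_ℂ * starRingEnd ℂ ⟪b, ρ (onI m I₂) b⟫_ℂ =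
      (((‖invProj ρ m b‖ ^ 2 - ‖b‖ ^ 2 / 2 ^ k) ^ 2 : ℝ) : ℂ) := by
  rw [← Finset.sum_mul_sum, ← map_sum, hρ.sum_inner_onI hm, Complex.conj_ofReal]
  have h4 : (4 : ℂ) ^ k = 2 ^ k * 2 ^ k := by rw [← mul_pow]; norm_num
  rw [h4]
  push_cast
  field_simp

end Involution

lemma expect_sq_sub_sq_expect_le {ι : Type*} {s : Finset ι} (hs : s.Nonempty) (X : ι → ℝ)
    (c : ℝ) : 𝔼 i ∈ s, X i ^ 2 - (𝔼 i ∈ s, X i) ^ 2 ≤ 𝔼 i ∈ s, (X i - c) ^ 2 := by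
  have hexpand : 𝔼 i ∈ s, (X i - c) ^ 2 =
      𝔼 i ∈ s, X i ^ 2 - 2 * c * 𝔼 i ∈ s, X i + c ^ 2 := by
    rw [Finset.mul_expect, ← Finset.expect_sub_distrib, ← Finset.expect_const hs (c ^ 2),
      ← Finset.expect_add_distrib]
    exact Finset.expect_congr rfl fun i _ => by ring
  rw [hexpand]
  linarith [sq_nonneg (𝔼 i ∈ s, X i - c)]

theorem stmt8_general {G : Type*} [Group G] [Fintype G]
    {J : Type*} [Fintype J]
    (W : J → Type*) [∀ j, NormedAddCommGroup (W j)] [∀ j, InnerProductSpace ℂ (W j)]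
    [∀ j, FiniteDimensional ℂ (W j)]
    (σ : ∀ j, Representation ℂ G (W j)) (hfam : IsCompleteFamily W σ)
    {k : ℕ}
    {V : Type*} [NormedAddCommGroup V] [InnerProductSpace ℂ V]
    (ρ : Representation ℂ (Fin k → G) V) (hρu : IsUnitaryRep ρ)
    (M : Finset G) (m₀ : G)
    (hM : ∀ m : G, m ∈ M ↔ IsConj m₀ m)
    (hm₀ : m₀ * m₀ = 1)
    (b : V) :
    (((1 / (M.card : ℝ)) * ∑ m ∈ M, (‖invProj ρ m b‖ ^ 2) ^ 2
        - ((1 / (M.card : ℝ)) * ∑ m ∈ M, ‖invProj ρ m b‖ ^ 2) ^ 2 : ℝ) : ℂ)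
      ≤ ((4 : ℂ) ^ k)⁻¹ *
          ∑ I₁ ∈ Finset.univ.filter (fun I : Finset (Fin k) => I ≠ ∅),
          ∑ I₂ ∈ Finset.univ.filter (fun I : Finset (Fin k) => I ≠ ∅),
          ∑ j, repChar (σ j) m₀ / (Module.finrank ℂ (W j) : ℂ) *
            ((Module.finrank ℂ (W j) : ℂ) / (Fintype.card G : ℂ) *
              ∑ g : G, starRingEnd ℂ (repChar (σ j) g) *
                (⟪b, ρ (onI g I₁) b⟫_ℂ * starRingEnd ℂ ⟪b, ρ (onI g I₂) b⟫_ℂ)) := by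
  have hne : M.Nonempty := ⟨m₀, (hM m₀).2 (.refl m₀)⟩
  have hinv : ∀ m ∈ M, m * m = 1 := fun m hm => by
    obtain ⟨x, rfl⟩ := isConj_iff.1 ((hM m).1 hm)
    rw [conj_mul, hm₀, mul_one, mul_inv_cancel]
  simp_rw [hfam.sum_repChar_div_finrank_mul_eq_expect hM
      (fun g => ⟪b, ρ (onI g _) b⟫_ℂ * starRingEnd ℂ ⟪b, ρ (onI g _) b⟫_ℂ),
    ← Finset.expect_sum_comm, Finset.mul_expect,
    Finset.expect_congr rfl fun m hm => hρu.sum_sum_inner_onI_mul_conj (hinv m hm) b]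
  have hvar := expect_sq_sub_sq_expect_le hne (fun m => ‖invProj ρ m b‖ ^ 2) (‖b‖ ^ 2 / 2 ^ k)
  rw [← Complex.ofReal_expect, Complex.real_le_real]
  simpa only [Finset.expect_eq_sum_div_card, div_eq_inv_mul, mul_one] using hvar

/-- Multiregister variance bound: for a unit vector `b`,
`Var_{m∈M} ‖Π_m b‖² ≤ 4^{-k} Σ_{∅≠I₁,I₂⊆[k]} E^{I₁,I₂}(b)`. -/
theorem stmt8 {G : Type*} [Group G] [Fintype G]
    {J : Type*} [Fintype J]
    (W : J → Type*) [∀ j, NormedAddCommGroup (W j)] [∀ j, InnerProductSpace ℂ (W j)]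
    [∀ j, FiniteDimensional ℂ (W j)]
    (σ : ∀ j, Representation ℂ G (W j)) (hfam : IsCompleteFamily W σ)
    {k : ℕ} (hk : 1 ≤ k)
    {V : Type*} [NormedAddCommGroup V] [InnerProductSpace ℂ V] [FiniteDimensional ℂ V]
    (ρ : Representation ℂ (Fin k → G) V) (hρu : IsUnitaryRep ρ)
    (M : Finset G) (m₀ : G) (hm₀M : m₀ ∈ M)
    (hM : ∀ m : G, m ∈ M ↔ IsConj m₀ m)
    (hinv : ∀ m ∈ M, m * m = 1 ∧ m ≠ 1)
    (b : V) (hb : ‖b‖ = 1) :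
    (((1 / (M.card : ℝ)) * ∑ m ∈ M, (‖invProj ρ m b‖ ^ 2) ^ 2
        - ((1 / (M.card : ℝ)) * ∑ m ∈ M, ‖invProj ρ m b‖ ^ 2) ^ 2 : ℝ) : ℂ)
      ≤ ((4 : ℂ) ^ k)⁻¹ *
          ∑ I₁ ∈ Finset.univ.filter (fun I : Finset (Fin k) => I ≠ ∅),
          ∑ I₂ ∈ Finset.univ.filter (fun I : Finset (Fin k) => I ≠ ∅),
          ∑ j, repChar (σ j) m₀ / (Module.finrank ℂ (W j) : ℂ) *
            ((Module.finrank ℂ (W j) : ℂ) / (Fintype.card G : ℂ) *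
              ∑ g : G, starRingEnd ℂ (repChar (σ j) g) *
                (⟪b, ρ (onI g I₁) b⟫_ℂ * starRingEnd ℂ ⟪b, ρ (onI g I₂) b⟫_ℂ)) := by
  exact stmt8_general W σ hfam ρ hρu M m₀ hM (hinv m₀ hm₀M).1 b
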